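/- Let T be a finite tile set over a glue alphabet in which every glue has strength at most g, and let τ₁, τ₂, … be a sequence of nondecreasing temperature functions and k₁, k₂, … a sequence of pairwise distinct integers with kᵢ ≥ 2 such that for each i the size-dependent system (T, τᵢ) has at least one terminal supertile and self-assembles the kᵢ × kᵢ square. Define f(n) = infᵢ τᵢ(n). Then f(n) is not ω(√n); that is, it is not the case that for every real C > 0 there exists N such that (f(n) : ℝ) > C·√n for all n ≥ N. -/

import Mathlib

/-!
A terminal supertile admits no break, so every cut of the terminal `k × k` square into two
connected parts of sizes `a` and `b` has strength at least `τ (min a b)`. Cut the square along a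
vertical line into its left `⌊k/2⌋` columns and the remaining columns (`exists_halving_break`).
Both parts are rectangles, hence connected (`connectedIn_box`), and only the `k` horizontally
adjacent pairs along the line can bond (`cutStrength_vertical_le`), so the cut has strength at most
`g * k`. The smaller part has `⌊k/2⌋ * k ≥ (k/2)²` tiles. If `inf τᵢ(n)` eventually exceeded
`(2g + 1) √n`, then for large `k` the temperature at this size would exceed `g * k`, so the terminal
square would break.
-/

/-- A tile type over glue alphabet `G`: four glues on the north, east, south,
and west edges. -/
structure Tile (G : Type) where
  north : G
  east : G
  south : G
  west : G

/-- Grid adjacency: two points of `ℤ²` at Euclidean distance 1. -/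
def Adj (p q : ℤ × ℤ) : Prop :=
  (p.1 - q.1).natAbs + (p.2 - q.2).natAbs = 1

/-- A set of grid points is connected under grid adjacency. -/
def ConnectedIn (S : Set (ℤ × ℤ)) : Prop :=
  ∀ p ∈ S, ∀ q ∈ S,
    Relation.ReflTransGen (fun a b => Adj a b ∧ a ∈ S ∧ b ∈ S) p q

/-- An assembly over the tile set `T`: a finite partial function from `ℤ²` to
tiles of `T` whose domain is connected under grid adjacency. -/
structure Assembly (G : Type) (T : Set (Tile G)) where
  tiles : ℤ × ℤ → Option (Tile G)
  dom : Finset (ℤ × ℤ)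
  mem_dom : ∀ p, p ∈ dom ↔ (tiles p).isSome
  connected : ConnectedIn (↑dom : Set (ℤ × ℤ))
  tiles_mem : ∀ p t, tiles p = some t → t ∈ T

/-- Strength of the bond between two abutting glues: the glues bond iff they
are equal, in which case the bond strength is the glue strength. -/
noncomputable def glueBond {G : Type} (str : G → ℕ) (a b : G) : ℕ := by
  classical
  exact if a = b then str a else 0

/-- The strength of the bond between a tile `t` at position `p` and a tile `u`
at position `q` (0 unless `p` and `q` are adjacent and the abutting glues
match). -/
noncomputable def tileBond {G : Type} (str : G → ℕ) (t u : Tile G) (p q : ℤ × ℤ) : ℕ :=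
  if q = (p.1 + 1, p.2) then glueBond str t.east u.west
  else if q = (p.1 - 1, p.2) then glueBond str t.west u.east
  else if q = (p.1, p.2 + 1) then glueBond str t.north u.south
  else if q = (p.1, p.2 - 1) then glueBond str t.south u.north
  else 0

/-- The strength of the bond between the tiles of `α` at positions `p`, `q`. -/
noncomputable def posBond {G : Type} {T : Set (Tile G)} (str : G → ℕ)
    (α : Assembly G T) (p q : ℤ × ℤ) : ℕ :=
  match α.tiles p, α.tiles q with
  | some t, some u => tileBond str t u p q
  | _, _ => 0

/-- The strength of the cut of `α` into the parts `A` and `B`: the total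
strength of bonds between tiles in opposite parts. -/
noncomputable def cutStrength {G : Type} {T : Set (Tile G)} (str : G → ℕ)
    (α : Assembly G T) (A B : Finset (ℤ × ℤ)) : ℕ :=
  ∑ p ∈ A, ∑ q ∈ B, posBond str α p q

/-- An assembly is `τ`-stable if every cut of it into two nonempty parts of
sizes `a` and `b` has strength at least `τ (min a b)`. -/
def IsStable {G : Type} {T : Set (Tile G)} (str : G → ℕ) (τ : ℕ → ℕ)
    (α : Assembly G T) : Prop :=
  ∀ A B : Finset (ℤ × ℤ), Disjoint A B → A ∪ B = α.dom →
    A.Nonempty → B.Nonempty →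
    τ (min A.card B.card) ≤ cutStrength str α A B

/-- Two assemblies represent the same supertile iff one is a translate of the
other. -/
def SameSupertile {G : Type} {T : Set (Tile G)} (α β : Assembly G T) : Prop :=
  ∃ v : ℤ × ℤ, ∀ p : ℤ × ℤ, β.tiles (p + v) = α.tiles p

/-- `γ` is the union of the disjoint assemblies `α` and `β`. -/
def IsUnionOf {G : Type} {T : Set (Tile G)} (γ α β : Assembly G T) : Prop :=
  Disjoint α.dom β.dom ∧ γ.dom = α.dom ∪ β.dom ∧
    (∀ p ∈ α.dom, γ.tiles p = α.tiles p) ∧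
    (∀ p ∈ β.dom, γ.tiles p = β.tiles p)

/-- The supertiles of `α` and `β` combine into the supertile of `γ`: there are
disjoint representatives whose union is a representative of `γ` such that the
cut between them has strength at least `τ` of the size of the smaller part. -/
def CombinesTo {G : Type} {T : Set (Tile G)} (str : G → ℕ) (τ : ℕ → ℕ)
    (α β γ : Assembly G T) : Prop :=
  ∃ α' β' γ' : Assembly G T, SameSupertile α α' ∧ SameSupertile β β' ∧
    SameSupertile γ γ' ∧ IsUnionOf γ' α' β' ∧
    τ (min α'.dom.card β'.dom.card) ≤ cutStrength str γ' α'.dom β'.dom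

/-- The supertile of `γ` breaks into the supertiles of `α` and `β`: there are
disjoint representatives (each with connected domain, as all assemblies have)
whose union is a representative of `γ` such that the cut between them has
strength strictly less than `τ` of the size of the smaller part. -/
def BreaksTo {G : Type} {T : Set (Tile G)} (str : G → ℕ) (τ : ℕ → ℕ)
    (γ α β : Assembly G T) : Prop :=
  ∃ α' β' γ' : Assembly G T, SameSupertile α α' ∧ SameSupertile β β' ∧
    SameSupertile γ γ' ∧ IsUnionOf γ' α' β' ∧
    cutStrength str γ' α'.dom β'.dom < τ (min α'.dom.card β'.dom.card)

/-- The producible supertiles of the size-dependent system `(T, τ)`: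
supertiles of size 1, combinations of two producible supertiles, and
supertiles resulting from a break of a producible supertile. -/
inductive Producible {G : Type} (str : G → ℕ) (T : Set (Tile G)) (τ : ℕ → ℕ) :
    Assembly G T → Prop
  | single (α : Assembly G T) : α.dom.card = 1 → Producible str T τ α
  | combine (α β γ : Assembly G T) : Producible str T τ α →
      Producible str T τ β → CombinesTo str τ α β γ → Producible str T τ γ
  | breakLeft (γ α β : Assembly G T) : Producible str T τ γ →
      BreaksTo str τ γ α β → Producible str T τ α
  | breakRight (γ α β : Assembly G T) : Producible str T τ γ →
      BreaksTo str τ γ α β → Producible str T τ β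

/-- A producible supertile is terminal if it admits no combination with any
producible supertile and no break. -/
def Terminal {G : Type} (str : G → ℕ) (T : Set (Tile G)) (τ : ℕ → ℕ)
    (α : Assembly G T) : Prop :=
  Producible str T τ α ∧
    (∀ β γ : Assembly G T, Producible str T τ β →
      ¬ CombinesTo str τ α β γ ∧ ¬ CombinesTo str τ β α γ) ∧
    (∀ β γ : Assembly G T, ¬ BreaksTo str τ α β γ)

/-- The system `(T, τ)` self-assembles the shape `P` if every terminal
supertile consists of assemblies whose domain is a translate of `P`. -/
def SelfAssembles {G : Type} (str : G → ℕ) (T : Set (Tile G)) (τ : ℕ → ℕ)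
    (P : Set (ℤ × ℤ)) : Prop :=
  ∀ α : Assembly G T, Terminal str T τ α →
    ∃ v : ℤ × ℤ, (↑α.dom : Set (ℤ × ℤ)) = (· + v) '' P

/-- The `w × h` rectangle `{1,…,w} × {1,…,h}`. -/
def rect (w h : ℕ) : Set (ℤ × ℤ) :=
  {p | 1 ≤ p.1 ∧ p.1 ≤ (w : ℤ) ∧ 1 ≤ p.2 ∧ p.2 ≤ (h : ℤ)}

/-- The lattice rectangle of points `p` with `a ≤ p.1 ≤ b` and `c ≤ p.2 ≤ d`. -/
noncomputable def box (a b c d : ℤ) : Finset (ℤ × ℤ) := Finset.Icc a b ×ˢ Finset.Icc c d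

lemma mem_box {a b c d : ℤ} {p : ℤ × ℤ} :
    p ∈ box a b c d ↔ (a ≤ p.1 ∧ p.1 ≤ b) ∧ c ≤ p.2 ∧ p.2 ≤ d := by
  simp [box]

lemma connectedIn_box (a b c d : ℤ) : ConnectedIn (↑(box a b c d) : Set (ℤ × ℤ)) := by
  intro p hp q hq
  -- Induct on the ℓ¹ distance: any two distinct points admit a step that shortens it.
  obtain ⟨n, hn⟩ : ∃ n : ℕ, (p.1 - q.1).natAbs + (p.2 - q.2).natAbs = n := ⟨_, rfl⟩
  induction n generalizing p with
  | zero =>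
    have h : p = q := Prod.ext (by omega) (by omega)
    rw [h]
  | succ n ih =>
    have hp' := mem_box.1 (Finset.mem_coe.1 hp)
    have hq' := mem_box.1 (Finset.mem_coe.1 hq)
    have step : ∃ r : ℤ × ℤ, Adj p r ∧ r ∈ box a b c d ∧
        (r.1 - q.1).natAbs + (r.2 - q.2).natAbs = n := by
      simp only [mem_box, Adj]
      rcases lt_trichotomy p.1 q.1 with h | h | h
      · exact ⟨(p.1 + 1, p.2), by dsimp only; omega, by dsimp only; omega, by dsimp only; omega⟩
      · rcases lt_or_ge p.2 q.2 with h' | h'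
        · exact ⟨(p.1, p.2 + 1), by dsimp only; omega, by dsimp only; omega, by dsimp only; omega⟩
        · exact ⟨(p.1, p.2 - 1), by dsimp only; omega, by dsimp only; omega, by dsimp only; omega⟩
      · exact ⟨(p.1 - 1, p.2), by dsimp only; omega, by dsimp only; omega, by dsimp only; omega⟩
    obtain ⟨r, hadj, hr, hd⟩ := step
    exact Relation.ReflTransGen.head ⟨hadj, hp, hr⟩ (ih r hr hd)

/-- The restriction of an assembly to a connected part of its domain. -/
noncomputable def Assembly.restrict {G : Type} {T : Set (Tile G)} (α : Assembly G T)
    (S : Finset (ℤ × ℤ)) (hS : S ⊆ α.dom) (hc : ConnectedIn (↑S : Set (ℤ × ℤ))) :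
    Assembly G T where
  tiles p := if p ∈ S then α.tiles p else none
  dom := S
  mem_dom p := by
    by_cases h : p ∈ S
    · simpa [h] using (α.mem_dom p).1 (hS h)
    · simp [h]
  connected := hc
  tiles_mem p t ht := by
    by_cases h : p ∈ S
    · exact α.tiles_mem p t (by simpa [h] using ht)
    · simp [h] at ht

lemma sameSupertile_refl {G : Type} {T : Set (Tile G)} (α : Assembly G T) :
    SameSupertile α α := ⟨0, fun p => by simp⟩

lemma glueBond_le {G : Type} {str : G → ℕ} {g : ℕ} (hg : ∀ a : G, str a ≤ g) (a b : G) :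
    glueBond str a b ≤ g := by
  unfold glueBond
  split_ifs
  · exact hg a
  · exact Nat.zero_le g

/-- Across a vertical line, a tile bonds at most with its east neighbour. -/
lemma posBond_le_of_lt {G : Type} {T : Set (Tile G)} {str : G → ℕ} {g : ℕ}
    (hg : ∀ a : G, str a ≤ g) (α : Assembly G T) {p q : ℤ × ℤ} (h : p.1 < q.1) :
    posBond str α p q ≤ if q = (p.1 + 1, p.2) then g else 0 := by
  unfold posBond
  split
  · unfold tileBond
    by_cases h1 : q = (p.1 + 1, p.2)
    · simp only [if_pos h1]
      exact glueBond_le hg _ _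
    · have h2 : q ≠ (p.1 - 1, p.2) := by rintro rfl; dsimp only at h; omega
      have h3 : q ≠ (p.1, p.2 + 1) := by rintro rfl; dsimp only at h; omega
      have h4 : q ≠ (p.1, p.2 - 1) := by rintro rfl; dsimp only at h; omega
      simp [h1, h2, h3, h4]
  · exact Nat.zero_le _

lemma cutStrength_vertical_le {G : Type} {T : Set (Tile G)} {str : G → ℕ} {g : ℕ}
    (hg : ∀ a : G, str a ≤ g) (α : Assembly G T) (a m b c d : ℤ) :
    cutStrength str α (box a m c d) (box (m + 1) b c d) ≤ g * (d + 1 - c).toNat := by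
  have key : ∀ p ∈ box a m c d,
      ∑ q ∈ box (m + 1) b c d, posBond str α p q ≤ if p.1 = m then g else 0 := by
    intro p hp
    calc ∑ q ∈ box (m + 1) b c d, posBond str α p q
        ≤ ∑ q ∈ box (m + 1) b c d, if q = (p.1 + 1, p.2) then g else 0 := by
          refine Finset.sum_le_sum fun q hq => posBond_le_of_lt hg α ?_
          have := mem_box.1 hp
          have := mem_box.1 hq
          omega
      _ = if (p.1 + 1, p.2) ∈ box (m + 1) b c d then g else 0 := by
          rw [Finset.sum_ite_eq']
      _ ≤ if p.1 = m then g else 0 := by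
          have := mem_box.1 hp
          by_cases h : p.1 = m
          · rw [if_pos h]; split_ifs <;> omega
          · rw [if_neg h, if_neg]
            rw [mem_box]; dsimp only; omega
  calc cutStrength str α (box a m c d) (box (m + 1) b c d)
      ≤ ∑ p ∈ box a m c d, if p.1 = m then g else 0 := Finset.sum_le_sum key
    _ = ((box a m c d).filter fun p => p.1 = m).card * g := by
        rw [← Finset.sum_filter, Finset.sum_const, smul_eq_mul]
    _ ≤ (d + 1 - c).toNat * g := by
        refine Nat.mul_le_mul_right g ?_
        rw [← Int.card_Icc]
        refine Finset.card_le_card_of_injOn Prod.snd ?_ ?_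
        · intro p hp
          have hp' := mem_box.1 (Finset.mem_filter.1 hp).1
          exact Finset.mem_coe.2 (Finset.mem_Icc.2 hp'.2)
        · intro p hp q hq hpq
          exact Prod.ext ((Finset.mem_filter.1 hp).2.trans (Finset.mem_filter.1 hq).2.symm) hpq
    _ = g * (d + 1 - c).toNat := Nat.mul_comm _ _

/-- A `k × k` square breaks as soon as the temperature at `⌊k/2⌋ * k` exceeds `g * k`: the cut
separating the left `⌊k/2⌋` columns from the others is too weak. -/
lemma exists_halving_break {G : Type} {T : Set (Tile G)} {str : G → ℕ} {g : ℕ}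
    (hg : ∀ a : G, str a ≤ g) {τ : ℕ → ℕ} {k : ℕ} (α : Assembly G T) (v : ℤ × ℤ)
    (hα : (↑α.dom : Set (ℤ × ℤ)) = (· + v) '' rect k k) (h : g * k < τ (k / 2 * k)) :
    ∃ β γ : Assembly G T, BreaksTo str τ α β γ := by
  obtain ⟨x, y⟩ := v
  set m : ℤ := x + (k / 2 : ℕ) with hm
  have hdom : α.dom = box (x + 1) (x + k) (y + 1) (y + k) := by
    ext p
    rw [← Finset.mem_coe, hα, mem_box]
    constructor
    · rintro ⟨q, ⟨h1, h2, h3, h4⟩, rfl⟩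
      simp only [Prod.fst_add, Prod.snd_add]
      omega
    · rintro hp
      exact ⟨p - (x, y), by simp only [rect, Set.mem_ofPred_eq, Prod.fst_sub, Prod.snd_sub]; omega,
        by simp⟩
  have hA : box (x + 1) m (y + 1) (y + k) ⊆ α.dom := by
    intro p; rw [hdom, mem_box, mem_box]; omega
  have hB : box (m + 1) (x + k) (y + 1) (y + k) ⊆ α.dom := by
    intro p; rw [hdom, mem_box, mem_box]; omega
  let β := α.restrict _ hA (connectedIn_box _ _ _ _)
  let γ := α.restrict _ hB (connectedIn_box _ _ _ _)
  refine ⟨β, γ, β, γ, α, sameSupertile_refl _, sameSupertile_refl _, sameSupertile_refl _,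
    ⟨?_, ?_, fun p hp => (if_pos hp).symm, fun p hp => (if_pos hp).symm⟩, ?_⟩
  · refine Finset.disjoint_left.2 fun p hp hq => ?_
    have := mem_box.1 hp
    have := mem_box.1 hq
    omega
  · ext p
    change p ∈ α.dom ↔ p ∈ box _ _ _ _ ∪ box _ _ _ _
    rw [hdom, Finset.mem_union, mem_box, mem_box, mem_box]
    omega
  · change cutStrength str α (box _ _ _ _) (box _ _ _ _) <
      τ (min (box _ _ _ _).card (box _ _ _ _).card)
    have hcard : min (box (x + 1) m (y + 1) (y + k)).card
        (box (m + 1) (x + k) (y + 1) (y + k)).card = k / 2 * k := by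
      simp only [box, Finset.card_product, Int.card_Icc]
      have e1 : (m + 1 - (x + 1)).toNat = k / 2 := by omega
      have e2 : (y + k + 1 - (y + 1)).toNat = k := by omega
      have e3 : k / 2 ≤ (x + k + 1 - (m + 1)).toNat := by omega
      rw [e1, e2]
      exact min_eq_left (Nat.mul_le_mul_right k e3)
    rw [hcard]
    refine (cutStrength_vertical_le hg α _ _ _ _ _).trans_lt ?_
    have e2 : (y + k + 1 - (y + 1)).toNat = k := by omega
    rwa [e2]

/-- If `T` is a finite tile set over a glue alphabet in which
every glue has strength at most `g`, and `τ₁, τ₂, …` are nondecreasing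
temperature functions and `k₁, k₂, …` pairwise distinct integers with `kᵢ ≥ 2`
such that each `(T, τᵢ)` has a terminal supertile and self-assembles the
`kᵢ × kᵢ` square, then `f(n) = infᵢ τᵢ(n)` is not `ω(√n)`. -/
theorem square_temperature_not_omega_sqrt {G : Type} (str : G → ℕ) (g : ℕ)
    (hg : ∀ a : G, str a ≤ g) (T : Set (Tile G)) (hT : T.Finite)
    (τ : ℕ → ℕ → ℕ) (hτ : ∀ i, Monotone (τ i))
    (k : ℕ → ℕ) (hk : Function.Injective k) (hk2 : ∀ i, 2 ≤ k i)
    (hsys : ∀ i : ℕ,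
      (∃ α : Assembly G T, Terminal str T (τ i) α) ∧
      SelfAssembles str T (τ i) (rect (k i) (k i))) :
    ¬ (∀ C : ℝ, 0 < C → ∃ N : ℕ, ∀ n : ℕ, N ≤ n →
        C * Real.sqrt n < ((⨅ i : ℕ, τ i n : ℕ) : ℝ)) := by
  intro hω
  obtain ⟨N, hN⟩ := hω (2 * g + 1) (by positivity)
  obtain ⟨i, hi⟩ := (hk.nat_tendsto_atTop.eventually_ge_atTop N).exists
  obtain ⟨⟨α, hα⟩, hsq⟩ := hsys i
  obtain ⟨v, hv⟩ := hsq α hα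
  have hki := hk2 i
  have hhalf : 1 ≤ k i / 2 := by omega
  have hlt := hN (k i / 2 * k i) (hi.trans (Nat.le_mul_of_pos_left _ hhalf))
  have hinf : (⨅ j : ℕ, τ j (k i / 2 * k i)) ≤ τ i (k i / 2 * k i) :=
    ciInf_le (OrderBot.bddBelow _) i
  -- For `k ≥ 2` one has `⌊k/2⌋ ≥ k/4`, hence `⌊k/2⌋ * k ≥ (k/2)²`.
  have hsqrt : (k i : ℝ) / 2 ≤ Real.sqrt ((k i / 2 * k i : ℕ) : ℝ) := by
    apply Real.le_sqrt_of_sq_le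
    have h4 : (k i : ℝ) ≤ 4 * ((k i / 2 : ℕ) : ℝ) := by
      exact_mod_cast (by omega : k i ≤ 4 * (k i / 2))
    rw [Nat.cast_mul]
    nlinarith [(k i).cast_nonneg (α := ℝ)]
  have hbig : g * k i < τ i (k i / 2 * k i) := by
    refine lt_of_lt_of_le ?_ hinf
    have h5 : (g : ℝ) * k i ≤ (2 * g + 1) * Real.sqrt ((k i / 2 * k i : ℕ) : ℝ) := by
      have : (2 * (g : ℝ) + 1) * (k i / 2) ≤ (2 * g + 1) * Real.sqrt ((k i / 2 * k i : ℕ) : ℝ) :=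
        mul_le_mul_of_nonneg_left hsqrt (by positivity)
      nlinarith [(k i).cast_nonneg (α := ℝ)]
    exact_mod_cast h5.trans_lt hlt
  obtain ⟨β, γ, hbr⟩ := exists_halving_break hg α v hv hbig
  exact hα.2.2 β γ hbr
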